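/- The formal Brieskorn lattice is ⟨s⟩-adically separated: ⋂_{k ≥ 0} (s^k·A + M) = M; equivalently, ⋂_{k ≥ 0} s^k·H = 0 in H = A/M. -/

import Mathlib

noncomputable section

open scoped Pointwise

/-- The formal partial derivative `∂ᵢ` with respect to the `i`th variable, determined by
`coeff α (∂ᵢ g) = (α i + 1) • coeff (α + eᵢ) g`. -/
def pd {σ : Type*} (i : σ) (g : MvPowerSeries σ ℂ) : MvPowerSeries σ ℂ :=
  fun α => ((α i : ℂ) + 1) * MvPowerSeries.coeff (α + Finsupp.single i 1) g

lemma coeff_pd {σ : Type*} (i : σ) (g : MvPowerSeries σ ℂ) (α : σ →₀ ℕ) :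
    MvPowerSeries.coeff α (pd i g) =
      ((α i : ℂ) + 1) * MvPowerSeries.coeff (α + Finsupp.single i 1) g := rfl

variable (n : ℕ)

/-- `R = ℂ[[x₁,…,xₙ]]`. -/
abbrev R' := MvPowerSeries (Fin n) ℂ

/-- `A = ℂ[[s,x₁,…,xₙ]]`, where `s` is the 0th variable and `xᵢ` is the variable
of index `i` (`1 ≤ i ≤ n`). -/
abbrev A' := MvPowerSeries (Fin (n + 1)) ℂ

/-- The variable `s` of `A`. -/
def sv : A' n := MvPowerSeries.X 0

/-- Forget the `s`-exponent of a multi-index of `A`. -/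
def tailF (β : Fin (n + 1) →₀ ℕ) : Fin n →₀ ℕ :=
  Finsupp.equivFunOnFinite.symm fun i => β i.succ

/-- The inclusion `R ⊆ A` as the subring of series not involving `s`. -/
def inclR (g : R' n) : A' n :=
  fun β => if β 0 = 0 then MvPowerSeries.coeff (tailF n β) g else 0

/-- The inclusion `ℂ[[s]] ⊆ A` as the subring of series in `s` alone. -/
def toA (p : PowerSeries ℂ) : A' n :=
  fun β => if tailF n β = 0 then PowerSeries.coeff (β 0) p else 0

lemma coeff_inclR (g : R' n) (β : Fin (n + 1) →₀ ℕ) :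
    MvPowerSeries.coeff β (inclR n g) =
      if β 0 = 0 then MvPowerSeries.coeff (tailF n β) g else 0 := rfl

/-- The `ℂ[[s]]`-linear operator `Fᵢ(g) = ∂ᵢ(f)·g − s·∂ᵢ(g)` on `A`. -/
def FF (f : R' n) (i : Fin n) (g : A' n) : A' n :=
  inclR n (pd i f) * g - sv n * pd i.succ g

/-- `M = range F₁ + ⋯ + range Fₙ`, so that `H = A/M` is the formal Brieskorn lattice. -/
def Mset (f : R' n) : Set (A' n) :=
  {a | ∃ q : Fin n → A' n, a = ∑ i, FF n f i (q i)}

/-- The Jacobian ideal `J(f) = ⟨∂₁f,…,∂ₙf⟩` of `R`. -/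
def Jf (f : R' n) : Ideal (R' n) :=
  Ideal.span (Set.range fun i : Fin n => pd i f)

/-- The maximal ideal `⟨x₁,…,xₙ⟩` of `R = ℂ[[x₁,…,xₙ]]`. -/
def mx : Ideal (R' n) :=
  Ideal.span (Set.range (MvPowerSeries.X : Fin n → R' n))

/-- The ideal `J(f)·A` of `A` generated by `∂₁(f),…,∂ₙ(f)`. -/
def JA (f : R' n) : Ideal (A' n) :=
  Ideal.span (Set.range fun i : Fin n => inclR n (pd i f))

/-- The ideal `⟨x₁,…,xₙ⟩·A` of `A` generated by the variables `x₁,…,xₙ` (not `s`). -/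
def XA : Ideal (A' n) :=
  Ideal.span (Set.range fun i : Fin n => (MvPowerSeries.X i.succ : A' n))

lemma pd_add {σ : Type*} (i : σ) (a b : MvPowerSeries σ ℂ) :
    pd i (a + b) = pd i a + pd i b := by
  ext α; simp [coeff_pd, mul_add]

lemma pd_smul {σ : Type*} (i : σ) (c : ℂ) (a : MvPowerSeries σ ℂ) :
    pd i (c • a) = c • pd i a := by
  ext α; simp [coeff_pd]; ring

lemma FF_add (f : R' n) (i : Fin n) (a b : A' n) :
    FF n f i (a + b) = FF n f i a + FF n f i b := by
  simp only [FF, pd_add, mul_add]; ring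

lemma FF_smul (f : R' n) (i : Fin n) (c : ℂ) (a : A' n) :
    FF n f i (c • a) = c • FF n f i a := by
  simp only [FF, pd_smul, Algebra.mul_smul_comm, smul_sub]

lemma FF_zero (f : R' n) (i : Fin n) : FF n f i 0 = 0 := by
  simpa using FF_smul n f i 0 0

/-- `M` as a `ℂ`-submodule of `A`. -/
def Msub (f : R' n) : Submodule ℂ (A' n) where
  carrier := Mset n f
  zero_mem' := ⟨0, by simp [FF_zero]⟩
  add_mem' := by
    rintro a b ⟨q, rfl⟩ ⟨q', rfl⟩
    exact ⟨q + q', by simp [FF_add, Finset.sum_add_distrib]⟩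
  smul_mem' := by
    rintro c a ⟨q, rfl⟩
    exact ⟨c • q, by simp [FF_smul, Finset.smul_sum]⟩

/-- The inclusion `R ⊆ A` as a `ℂ`-linear map. -/
def inclL : R' n →ₗ[ℂ] A' n where
  toFun := inclR n
  map_add' a b := by
    ext β; simp only [coeff_inclR, map_add]; split <;> simp
  map_smul' c a := by
    ext β; simp only [coeff_inclR, map_smul, RingHom.id_apply]; split <;> simp

/-!
Writing `A = R⟦s⟧`, the lattice `H` is the cokernel of the `ℂ⟦s⟧`-linear map
`φ(q) = ∑ i, (∂ᵢf · qᵢ - s ∂ᵢqᵢ)`. Modulo `s` this map is multiplication by the `∂ᵢf`, so `H / sH`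
is the Milnor algebra `R / J(f)`, which is finite-dimensional because the singularity is isolated.
Since source and target of `φ` are `s`-adically complete, a topological Nakayama argument makes `H`
a finite `ℂ⟦s⟧`-module, and Krull's intersection theorem over `ℂ⟦s⟧` gives separatedness.
-/

section AdicModules

variable {R M N : Type*} [CommRing R] [AddCommGroup M] [Module R M] [AddCommGroup N] [Module R N]

lemma isPrecomplete_prod (I : Ideal R) [IsPrecomplete I M] [IsPrecomplete I N] :
    IsPrecomplete I (M × N) where
  prec' f hf := by
    obtain ⟨x, hx⟩ := IsPrecomplete.prec (I := I) ‹_› (f := fun j => (f j).1) fun h =>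
      ((hf h).map (LinearMap.fst R M N)).mono (by simp [Submodule.map_smul''])
    obtain ⟨y, hy⟩ := IsPrecomplete.prec (I := I) ‹_› (f := fun j => (f j).2) fun h =>
      ((hf h).map (LinearMap.snd R M N)).mono (by simp [Submodule.map_smul''])
    refine ⟨(x, y), fun j => ?_⟩
    have hinl := ((hx j).map (LinearMap.inl R M N)).mono (U₂ := I ^ j • ⊤)
      (by simpa only [Submodule.map_smul''] using Submodule.smul_mono le_rfl le_top)
    have hinr := ((hy j).map (LinearMap.inr R M N)).mono (U₂ := I ^ j • ⊤)
      (by simpa only [Submodule.map_smul''] using Submodule.smul_mono le_rfl le_top)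
    simpa using hinl.add hinr

lemma isPrecomplete_pi {ι : Type*} [Finite ι] {M : ι → Type*} [∀ i, AddCommGroup (M i)]
    [∀ i, Module R (M i)] (I : Ideal R) [∀ i, IsPrecomplete I (M i)] :
    IsPrecomplete I (∀ i, M i) := by
  classical
  have := Fintype.ofFinite ι
  refine AdicCompletion.of_surjective_iff.mp fun y => ?_
  choose x hx using fun i =>
    AdicCompletion.of_surjective I (M i) (AdicCompletion.piEquivOfFintype I M y i)
  refine ⟨x, (AdicCompletion.piEquivOfFintype I M).injective <| funext fun i => ?_⟩
  rw [← hx, AdicCompletion.piEquivOfFintype_apply]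
  exact AdicCompletion.map_of I _ x

theorem finite_quotient_range (I : Ideal R) [IsPrecomplete I R] [IsPrecomplete I M]
    [IsHausdorff I N] (φ : M →ₗ[R] N)
    [Module.Finite R (N ⧸ (LinearMap.range φ ⊔ I • ⊤ : Submodule R N))] :
    Module.Finite R (N ⧸ LinearMap.range φ) := by
  -- `N ⧸ range φ` need not be separated a priori, so Nakayama is applied to the sum of `φ` and a
  -- lift `ψ` of generators, whose target `N` is separated.
  obtain ⟨r, π, hπ⟩ := Module.Finite.exists_fin' R (N ⧸ (LinearMap.range φ ⊔ I • ⊤))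
  obtain ⟨ψ, hψ⟩ := Module.projective_lifting_property _ π
    (Submodule.mkQ_surjective (LinearMap.range φ ⊔ I • ⊤))
  have := isPrecomplete_pi (M := fun _ : Fin r => R) I
  have := isPrecomplete_prod (M := M) (N := Fin r → R) I
  have hsup : (LinearMap.range φ ⊔ I • ⊤) ⊔ LinearMap.range ψ = ⊤ := by
    rw [← Submodule.map_mkQ_eq_top, ← LinearMap.range_comp, hψ, LinearMap.range_eq_top.mpr hπ]
  have hsurj : Function.Surjective (φ.coprod ψ) := by
    refine surjective_of_mkQ_comp_surjective (I := I) ?_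
    rwa [← LinearMap.range_eq_top, LinearMap.range_comp, Submodule.map_mkQ_eq_top,
      LinearMap.range_coprod, sup_comm, sup_right_comm]
  refine .of_surjective ((LinearMap.range φ).mkQ ∘ₗ ψ) fun z => ?_
  obtain ⟨y, rfl⟩ := Submodule.mkQ_surjective _ z
  obtain ⟨⟨x, c⟩, rfl⟩ := hsurj y
  exact ⟨c, by simp⟩

theorem isHausdorff_quotient_range [IsNoetherianRing R] (I : Ideal R) [IsAdicComplete I R]
    [IsPrecomplete I M] [IsHausdorff I N] (φ : M →ₗ[R] N)
    [Module.Finite R (N ⧸ (LinearMap.range φ ⊔ I • ⊤ : Submodule R N))] :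
    IsHausdorff I (N ⧸ LinearMap.range φ) :=
  have := finite_quotient_range I φ
  .of_le_jacobson I _ (IsAdicComplete.le_jacobson_bot I)

theorem iInter_pow_smul_top_add_eq (I : Ideal R) (W : Submodule R N) [IsHausdorff I (N ⧸ W)] :
    ⋂ k : ℕ, ((I ^ k • ⊤ : Submodule R N) + W : Set N) = W := by
  refine Set.Subset.antisymm (fun x hx => ?_) (Set.subset_iInter fun k x hx =>
    ⟨0, zero_mem _, x, hx, zero_add x⟩)
  refine (Submodule.Quotient.mk_eq_zero W).mp (IsHausdorff.haus' (I := I) _ fun k => ?_)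
  obtain ⟨y, hy, w, hw, rfl⟩ := Set.mem_iInter.mp hx k
  have hwk := Submodule.mem_map_of_mem (f := W.mkQ) hy
  rw [Submodule.map_smul'', Submodule.map_top, Submodule.range_mkQ] at hwk
  rw [SModEq.zero]
  simpa [(Submodule.Quotient.mk_eq_zero W).mpr hw] using hwk

end AdicModules

section FiniteColength

theorem finite_quotient_of_pow_le {k A : Type*} [CommRing k] [CommRing A] [Algebra k A]
    [IsNoetherianRing A] {I J : Ideal A} {m : ℕ} [Module.Finite k (A ⧸ I)] (h : I ^ m ≤ J) :
    Module.Finite k (A ⧸ J) := by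
  have : Module.Finite k (A ⧸ (I ⊔ J)) :=
    .of_surjective (Ideal.Quotient.factorₐ k (le_sup_left : I ≤ I ⊔ J)).toLinearMap
      (Ideal.Quotient.factor_surjective le_sup_left)
  refine Module.finite_of_surjective_of_ker_le_nilradical
    (Ideal.Quotient.factorₐ k (le_sup_right : J ≤ I ⊔ J))
    (Ideal.Quotient.factor_surjective le_sup_right) (fun z hz => ?_) (IsNoetherian.noetherian _)
  obtain ⟨z, rfl⟩ := Ideal.Quotient.mk_surjective z
  obtain ⟨x, hx, y, hy, rfl⟩ := Submodule.mem_sup.mp (Ideal.Quotient.eq_zero_iff_mem.mp hz)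
  refine ⟨m, ?_⟩
  rw [map_add, Ideal.Quotient.eq_zero_iff_mem.mpr hy, add_zero, ← map_pow]
  exact Ideal.Quotient.eq_zero_iff_mem.mpr (h (Ideal.pow_mem_pow hx m))

variable {σ k : Type*} [CommRing k]

open MvPowerSeries

lemma mem_span_image_X_of_coeff_eq_zero (s : Finset σ) {g : MvPowerSeries σ k}
    (hg : ∀ β, (∀ i ∈ s, β i = 0) → coeff β g = 0) : g ∈ Ideal.span (X '' (s : Set σ)) := by
  classical
  induction s using Finset.induction_on generalizing g with
  | empty =>
    rw [show g = 0 from MvPowerSeries.ext fun β => by simpa using hg β]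
    exact zero_mem _
  | insert i s _ ih =>
    let g₀ : MvPowerSeries σ k := fun β => if β i = 0 then coeff β g else 0
    have hg₀ (β : σ →₀ ℕ) : coeff β g₀ = if β i = 0 then coeff β g else 0 := rfl
    rw [Finset.coe_insert, Set.image_insert_eq, Ideal.span_insert]
    have hi : X i ∣ g - g₀ := X_dvd_iff.mpr fun β hβ => by simp [hg₀, hβ]
    rw [← sub_add_cancel g g₀]
    refine Submodule.add_mem_sup (Ideal.mem_span_singleton.mpr hi) (ih fun β hβ => ?_)
    rw [hg₀]
    split_ifs with hβi
    · exact hg β ((Finset.forall_mem_insert _ _ _).mpr ⟨hβi, hβ⟩)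
    · rfl

theorem finite_quotient_span_range_X [Finite σ] :
    Module.Finite k (MvPowerSeries σ k ⧸ Ideal.span (Set.range (X : σ → MvPowerSeries σ k))) := by
  have := Fintype.ofFinite σ
  refine .of_surjective (Algebra.linearMap k _) fun z => ?_
  obtain ⟨g, rfl⟩ := Ideal.Quotient.mk_surjective z
  have hg : C (constantCoeff g) - g ∈ Ideal.span (Set.range (X : σ → MvPowerSeries σ k)) := by
    rw [← Set.image_univ, ← Finset.coe_univ]
    refine mem_span_image_X_of_coeff_eq_zero _ fun β hβ => ?_
    rw [show β = 0 from Finsupp.ext fun i => hβ i (Finset.mem_univ i)]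
    simp
  exact ⟨constantCoeff g, Ideal.Quotient.eq.mpr hg⟩

end FiniteColength

section PowerSeries

open PowerSeries

variable {k S T ι : Type*} [CommRing k] [CommRing S] [Algebra k S] [CommRing T] [Algebra k T]

instance isScalarTower_powerSeries : IsScalarTower k k⟦X⟧ S⟦X⟧ :=
  .of_algebraMap_eq fun c => by
    simp [PowerSeries.algebraMap_apply'', PowerSeries.algebraMap_apply]

lemma map_algebraMap_span_X_pow (N : ℕ) :
    (Ideal.span {(X : k⟦X⟧)} ^ N).map (algebraMap k⟦X⟧ S⟦X⟧) = Ideal.span {X} ^ N := by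
  simp [Ideal.map_pow, Ideal.map_span, PowerSeries.algebraMap_apply'']

lemma span_X_pow_smul_top (N : ℕ) :
    (Ideal.span {(X : k⟦X⟧)} ^ N • ⊤ : Submodule k⟦X⟧ S⟦X⟧) =
      (Ideal.span {X ^ N} : Ideal S⟦X⟧).restrictScalars k⟦X⟧ := by
  rw [Ideal.smul_top_eq_map, map_algebraMap_span_X_pow, Ideal.span_singleton_pow]

instance isAdicComplete_span_X_powerSeries :
    IsAdicComplete (Ideal.span {(X : k⟦X⟧)}) S⟦X⟧ := by
  have hX := map_algebraMap_span_X_pow (k := k) (S := S) 1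
  rw [pow_one, pow_one] at hX
  rw [← IsAdicComplete.map_algebraMap_iff (S := S⟦X⟧), hX]
  infer_instance

lemma coeff_powerSeries_smul (p : k⟦X⟧) (g : S⟦X⟧) (j : ℕ) :
    coeff j (p • g) = ∑ x ∈ Finset.HasAntidiagonal.antidiagonal j, coeff x.1 p • coeff x.2 g := by
  simp only [Algebra.smul_def, PowerSeries.algebraMap_apply'', coeff_mul, coeff_map]

/-- The `k⟦X⟧`-linear extension of a `k`-linear map `D` to power series, applying `D` to each
coefficient. -/
def coeffwise (D : S →ₗ[k] T) : S⟦X⟧ →ₗ[k⟦X⟧] T⟦X⟧ where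
  toFun g := PowerSeries.mk fun j => D (coeff j g)
  map_add' g h := by ext j; simp
  map_smul' p g := by ext j; simp [coeff_powerSeries_smul]

@[simp]
lemma coeff_coeffwise (D : S →ₗ[k] T) (g : S⟦X⟧) (j : ℕ) :
    coeff j (coeffwise D g) = D (coeff j g) :=
  coeff_mk j fun j => D (coeff j g)

lemma coeffwise_C (D : S →ₗ[k] T) (x : S) : coeffwise D (C x) = C (D x) := by
  ext j
  rw [coeff_coeffwise, coeff_C, coeff_C, apply_ite D, map_zero]

variable [Fintype ι] (a : ι → S) (D : ι → S →ₗ[k] S)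

/-- The map `q ↦ ∑ i, (aᵢ qᵢ - X Dᵢ(qᵢ))`. For `S = ℂ⟦x₁, …, xₙ⟧`, `X = s`, `Dᵢ = ∂ᵢ` and
`aᵢ = ∂ᵢ f`, its cokernel is the formal Brieskorn lattice of `f`. -/
def brieskornMap : (ι → S⟦X⟧) →ₗ[k⟦X⟧] S⟦X⟧ :=
  ∑ i, (LinearMap.mulLeft k⟦X⟧ (C (a i)) - (X : k⟦X⟧) • coeffwise (D i)) ∘ₗ LinearMap.proj i

lemma brieskornMap_apply (q : ι → S⟦X⟧) :
    brieskornMap a D q = ∑ i, (C (a i) * q i - X * coeffwise (D i) (q i)) := by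
  simp [brieskornMap, Algebra.smul_def, PowerSeries.algebraMap_apply'']

lemma C_mem_range_brieskornMap_sup {x : S} (hx : x ∈ Ideal.span (Set.range a)) :
    C x ∈ LinearMap.range (brieskornMap a D) ⊔
      (Ideal.span {X} : Ideal S⟦X⟧).restrictScalars k⟦X⟧ := by
  obtain ⟨c, rfl⟩ := Ideal.mem_span_range_iff_exists_fun.mp hx
  refine Submodule.mem_sup.mpr ⟨_, ⟨fun i => C (c i), rfl⟩, X * ∑ i, C (D i (c i)),
    Ideal.mul_mem_right _ _ (Ideal.mem_span_singleton_self X), ?_⟩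
  simp only [brieskornMap_apply, coeffwise_C, Finset.mul_sum, ← Finset.sum_add_distrib,
    sub_add_cancel, map_sum, map_mul, mul_comm]

theorem finite_quotient_range_brieskornMap_sup [Module.Finite k (S ⧸ Ideal.span (Set.range a))] :
    Module.Finite k⟦X⟧ (S⟦X⟧ ⧸ (LinearMap.range (brieskornMap a D) ⊔
      (Ideal.span {X} : Ideal S⟦X⟧).restrictScalars k⟦X⟧)) := by
  set W := LinearMap.range (brieskornMap a D) ⊔ (Ideal.span {X}).restrictScalars k⟦X⟧
  let J := (Ideal.span (Set.range a)).restrictScalars k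
  have : Module.Finite k (S ⧸ J) := .equiv (Submodule.Quotient.restrictScalarsEquiv k _).symm
  let toQuotient : S →ₗ[k] S⟦X⟧ ⧸ W :=
    W.mkQ.restrictScalars k ∘ₗ (IsScalarTower.toAlgHom k S S⟦X⟧).toLinearMap
  have hker : J ≤ LinearMap.ker toQuotient := fun x hx =>
    (Submodule.Quotient.mk_eq_zero W).mpr (C_mem_range_brieskornMap_sup a D hx)
  have : Module.Finite k (S⟦X⟧ ⧸ W) := by
    refine .of_surjective (J.liftQ toQuotient hker) fun z => ?_
    obtain ⟨g, rfl⟩ := W.mkQ_surjective z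
    refine ⟨J.mkQ (constantCoeff g), (Submodule.Quotient.eq W).mpr (Submodule.mem_sup_right ?_)⟩
    exact Ideal.mem_span_singleton.mpr (X_dvd_iff.mpr (by simp))
  exact .of_restrictScalars_finite k k⟦X⟧ _

theorem brieskorn_separated_general [IsNoetherianRing k]
    [Module.Finite k (S ⧸ Ideal.span (Set.range a))] :
    ⋂ N : ℕ, ((Ideal.span {X ^ N} : Ideal S⟦X⟧) + LinearMap.range (brieskornMap a D) : Set S⟦X⟧) =
      LinearMap.range (brieskornMap a D) := by
  have : IsPrecomplete (Ideal.span {(X : k⟦X⟧)}) (ι → S⟦X⟧) := isPrecomplete_pi _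
  have hfin := finite_quotient_range_brieskornMap_sup a D
  rw [← pow_one X, ← span_X_pow_smul_top, pow_one] at hfin
  have := isHausdorff_quotient_range (Ideal.span {(X : k⟦X⟧)}) (brieskornMap a D)
  simpa only [span_X_pow_smul_top, Submodule.coe_restrictScalars] using
    iInter_pow_smul_top_add_eq (Ideal.span {(X : k⟦X⟧)}) (LinearMap.range (brieskornMap a D))

end PowerSeries

section Transfer

open MvPowerSeries

lemma pd_eq_pderiv {σ : Type*} (i : σ) (g : MvPowerSeries σ ℂ) : pd i g = pderiv ℂ i g := by
  ext α
  rw [coeff_pd, coeff_pderiv, mul_comm]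

variable {n}

lemma finite_quotient_Jf {f : R' n} {m : ℕ} (hiso : mx n ^ m ≤ Jf n f) :
    Module.Finite ℂ (R' n ⧸ Jf n f) :=
  have : Module.Finite ℂ (R' n ⧸ mx n) := finite_quotient_span_range_X
  finite_quotient_of_pow_le hiso

lemma finSuccEquiv_inclR (g : R' n) : finSuccEquiv ℂ n (inclR n g) = PowerSeries.C g := by
  ext j α
  have htail : tailF n (α.cons j) = α := by ext i; simp [tailF]
  rw [coeff_coeff_finSuccEquiv, coeff_inclR, htail, Finsupp.cons_zero, PowerSeries.coeff_C,
    apply_ite (coeff α), coeff_zero]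

lemma finSuccEquiv_pd_succ (i : Fin n) (g : A' n) :
    finSuccEquiv ℂ n (pd i.succ g) =
      coeffwise (pderiv ℂ i).toLinearMap (finSuccEquiv ℂ n g) := by
  ext j α
  have hcons : α.cons j + Finsupp.single i.succ 1 = (α + Finsupp.single i 1).cons j := by
    ext l
    cases l using Fin.cases <;> simp [Finsupp.single_apply, Fin.succ_inj]
  simp [coeff_coeff_finSuccEquiv, coeff_pd, coeff_pderiv, hcons, mul_comm]

lemma finSuccEquiv_FF (f : R' n) (i : Fin n) (g : A' n) :
    finSuccEquiv ℂ n (FF n f i g) = PowerSeries.C (pd i f) * finSuccEquiv ℂ n g -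
      PowerSeries.X * coeffwise (pderiv ℂ i).toLinearMap (finSuccEquiv ℂ n g) := by
  rw [FF, map_sub, map_mul, map_mul, finSuccEquiv_inclR, finSuccEquiv_pd_succ, sv,
    finSuccEquiv_X_zero]

lemma Mset_eq_preimage (f : R' n) :
    Mset n f = finSuccEquiv ℂ n ⁻¹' LinearMap.range
      (brieskornMap (fun i => pd i f) fun i => (pderiv ℂ i).toLinearMap) := by
  ext g
  constructor
  · rintro ⟨q, rfl⟩
    exact ⟨fun i => finSuccEquiv ℂ n (q i), by simp only [brieskornMap_apply, map_sum,
      finSuccEquiv_FF]⟩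
  · rintro ⟨q, hq⟩
    refine ⟨fun i => (finSuccEquiv ℂ n).symm (q i), (finSuccEquiv ℂ n).injective ?_⟩
    simp only [← hq, brieskornMap_apply, map_sum, finSuccEquiv_FF, AlgEquiv.apply_symm_apply]

lemma span_sv_pow_eq_preimage (k : ℕ) :
    (Ideal.span {sv n ^ k} : Set (A' n)) =
      finSuccEquiv ℂ n ⁻¹' (Ideal.span {PowerSeries.X ^ k} : Ideal (PowerSeries (R' n))) := by
  ext g
  simp [Ideal.mem_span_singleton, ← map_dvd_iff (finSuccEquiv ℂ n), sv, finSuccEquiv_X_zero]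

lemma span_sv_pow_add_Mset_eq_preimage (f : R' n) (k : ℕ) :
    (Ideal.span {sv n ^ k} : Set (A' n)) + Mset n f =
      finSuccEquiv ℂ n ⁻¹' ((Ideal.span {PowerSeries.X ^ k} : Ideal (PowerSeries (R' n))) +
        LinearMap.range (brieskornMap (fun i => pd i f) fun i => (pderiv ℂ i).toLinearMap)) := by
  have hrange := (finSuccEquiv ℂ n).surjective.range_eq
  rw [span_sv_pow_eq_preimage, Mset_eq_preimage, Set.preimage_add _ (finSuccEquiv ℂ n).injective
    (hrange ▸ Set.subset_univ _) (hrange ▸ Set.subset_univ _)]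

end Transfer

/-- **The formal Brieskorn lattice is `⟨s⟩`-adically separated**:
`⋂ₖ (s^k·A + M) = M`, i.e. `⋂ₖ s^k·H = 0` in `H = A/M`. -/
theorem brieskorn_separated (n : ℕ) (hn : 1 ≤ n) (f : R' n)
    (hf0 : MvPowerSeries.constantCoeff f = 0)
    (m : ℕ) (hm : 1 ≤ m) (hiso : mx n ^ m ≤ Jf n f) :
    (⋂ k : ℕ, (((Ideal.span {sv n ^ k} : Ideal (A' n)) : Set (A' n)) + Mset n f)) =
      Mset n f := by
  have : Module.Finite ℂ (R' n ⧸ Ideal.span (Set.range fun i => pd i f)) := finite_quotient_Jf hiso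
  simp_rw [span_sv_pow_add_Mset_eq_preimage, ← Set.preimage_iInter, brieskorn_separated_general,
    Mset_eq_preimage]
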